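/- Suspension formula: Let H be a finite abstract simplicial complex with vertex set V ⊆ ℕ and let a, b be two natural numbers not in V. Define the suspension S(H) = H ∪ {{a},{b}} ∪ {x ∪ {a} : x ∈ H} ∪ {x ∪ {b} : x ∈ H}, which is a finite abstract simplicial complex. Then b_0(S(H)) = 1, b_1(S(H)) = b_0(H) − 1, and b_k(S(H)) = b_{k−1}(H) for all k ≥ 2. -/

import Mathlib

open Matrix

/-- A finite abstract simplicial complex: a finite nonempty collection of nonempty
finite subsets of ℕ closed under taking nonempty subsets. -/
def IsComplex (G : Finset (Finset ℕ)) : Prop :=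
  G.Nonempty ∧ ∅ ∉ G ∧ ∀ x ∈ G, ∀ y : Finset ℕ, y ⊆ x → y.Nonempty → y ∈ G

/-- A subcomplex: a set of sets closed under taking nonempty subsets. -/
def IsSubcomplex (K : Finset (Finset ℕ)) : Prop :=
  ∀ x ∈ K, ∀ y : Finset ℕ, y ⊆ x → y.Nonempty → y ∈ K

/-- The incidence sign s(x,y) = (-1)^i when y is obtained from x by deleting the
(i+1)-th smallest element of x. -/
noncomputable def incSign (x y : Finset ℕ) : ℝ :=
  (-1 : ℝ) ^ (x.filter (fun v => ∃ w ∈ x \ y, v < w)).card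

/-- The exterior derivative matrix of a subset A of a simplicial complex. -/
noncomputable def extDer (A : Finset (Finset ℕ)) : Matrix A A ℝ :=
  Matrix.of fun x y =>
    if (y : Finset ℕ) ⊆ (x : Finset ℕ) ∧ (x : Finset ℕ).card = (y : Finset ℕ).card + 1
    then incSign (x : Finset ℕ) (y : Finset ℕ) else 0

/-- The Dirac matrix D = d + dᵀ. -/
noncomputable def dirac (A : Finset (Finset ℕ)) : Matrix A A ℝ :=
  extDer A + (extDer A)ᵀ

/-- The Hodge Laplacian L = D². -/
noncomputable def hodge (A : Finset (Finset ℕ)) : Matrix A A ℝ :=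
  dirac A * dirac A

/-- The block of the Hodge Laplacian acting on p-forms: the submatrix of L on
the p-simplices (sets of cardinality p+1). -/
noncomputable def hodgeBlock (A : Finset (Finset ℕ)) (p : ℕ) :
    Matrix (A.filter fun x => x.card = p + 1) (A.filter fun x => x.card = p + 1) ℝ :=
  (hodge A).submatrix
    (fun x => ⟨x.1, (Finset.mem_filter.mp x.2).1⟩)
    (fun x => ⟨x.1, (Finset.mem_filter.mp x.2).1⟩)

/-- The p-th Betti number: the dimension of the kernel of the p-form block of the
Hodge Laplacian. -/
noncomputable def betti (A : Finset (Finset ℕ)) (p : ℕ) : ℕ :=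
  Module.finrank ℝ (LinearMap.ker (Matrix.toLin' (hodgeBlock A p)))

/-- The suspension of H with two new vertices a and b:
S(H) = H ∪ {{a},{b}} ∪ {x ∪ {a} : x ∈ H} ∪ {x ∪ {b} : x ∈ H}. -/
def susp (H : Finset (Finset ℕ)) (a b : ℕ) : Finset (Finset ℕ) :=
  H ∪ {{a}, {b}} ∪ H.image (insert a) ∪ H.image (insert b)

/-!
Adding the empty simplex turns the suspension of `H` into the double cone of `H ∪ {∅}`. By Hodge
theory over `ℝ`, the Betti numbers of an augmented complex are determined by the ranks of its
coboundary maps. Up to signs, the coboundary of the double cone is the mapping cone of the diagonal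
`C → C ⊕ C`, where `C` is the augmented cochain complex of `H`; its cocycles `(d g, g, g - z)` are
parametrized by an arbitrary cochain `g` and a cocycle `z`. So suspension shifts the augmented Betti
numbers by one, and augmentation itself only lowers `b₀` by one.
-/

open scoped Finset

section Rank

variable {l m n R : Type*} [Fintype l] [Fintype m] [Field R]

theorem rank_add_finrank_ker_mulVecLin (M : Matrix n m R) :
    M.rank + Module.finrank R (LinearMap.ker M.mulVecLin) = Fintype.card m := by
  rw [Matrix.rank, LinearMap.finrank_range_add_finrank_ker, Module.finrank_fintype_fun_eq_card]

section Ordered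

variable [Fintype n] [LinearOrder R] [IsStrictOrderedRing R]

theorem disjoint_range_mulVecLin_of_transpose_mul_eq_zero {B : Matrix m l R} {C : Matrix m n R}
    (h : Bᵀ * C = 0) :
    Disjoint (LinearMap.range B.mulVecLin) (LinearMap.range C.mulVecLin) := by
  rw [Submodule.disjoint_def]
  rintro _ ⟨x, rfl⟩ ⟨y, hxy⟩
  simp only [mulVecLin_apply] at hxy ⊢
  rw [← dotProduct_self_eq_zero]
  nth_rw 2 [← hxy]
  rw [dotProduct_mulVec, ← mulVec_transpose, mulVec_mulVec, ← transpose_transpose B,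
    ← transpose_mul, h, transpose_zero, zero_mulVec, zero_dotProduct]

theorem rank_fromCols_of_transpose_mul_eq_zero {B : Matrix m l R} {C : Matrix m n R}
    (h : Bᵀ * C = 0) : (fromCols B C).rank = B.rank + C.rank := by
  have col_eq : (fromCols B C).col = Sum.elim B.col C.col := by
    ext (j | j) i <;> rfl
  have range_eq : LinearMap.range (fromCols B C).mulVecLin =
      LinearMap.range B.mulVecLin ⊔ LinearMap.range C.mulVecLin := by
    simp only [range_mulVecLin, col_eq, Set.Sum.elim_range, Submodule.span_union]
  rw [Matrix.rank, range_eq, ← add_zero (Module.finrank _ _), ← finrank_bot R (m → R),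
    ← (disjoint_range_mulVecLin_of_transpose_mul_eq_zero h).eq_bot,
    Submodule.finrank_sup_add_finrank_inf_eq]
  rfl

theorem rank_mul_transpose_add_transpose_mul {B : Matrix m l R} {C : Matrix n m R}
    (h : C * B = 0) : (B * Bᵀ + Cᵀ * C).rank = B.rank + C.rank := by
  have gram : B * Bᵀ + Cᵀ * C = fromCols B Cᵀ * (fromCols B Cᵀ)ᵀ := by
    rw [transpose_fromCols, fromCols_mul_fromRows, transpose_transpose]
  rw [gram, rank_self_mul_transpose, rank_fromCols_of_transpose_mul_eq_zero, rank_transpose]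
  rw [← transpose_mul, h, transpose_zero]

end Ordered

/-- The map `(f, g, h) ↦ (d₁ f, f - d₀ g, f - d₀ h)`: the differential of the mapping cone of the
diagonal map `C → C ⊕ C` of a cochain complex `C` with consecutive differentials `d₀` and `d₁`. -/
def diagonalCone [DecidableEq m] (d₁ : Matrix n m R) (d₀ : Matrix m l R) :
    Matrix (n ⊕ m ⊕ m) (m ⊕ l ⊕ l) R :=
  fromBlocks d₁ 0 (fromRows 1 1) (fromBlocks (-d₀) 0 0 (-d₀))

variable [DecidableEq m] {d₁ : Matrix n m R} {d₀ : Matrix m l R}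

theorem mem_ker_diagonalCone (h : d₁ * d₀ = 0) {v : m ⊕ l ⊕ l → R} :
    v ∈ LinearMap.ker (diagonalCone d₁ d₀).mulVecLin ↔
      v ∘ Sum.inl = d₀ *ᵥ (v ∘ Sum.inr ∘ Sum.inl) ∧
        v ∘ Sum.inl = d₀ *ᵥ (v ∘ Sum.inr ∘ Sum.inr) := by
  have apply_eq : diagonalCone d₁ d₀ *ᵥ v =
      Sum.elim (d₁ *ᵥ (v ∘ Sum.inl)) (Sum.elim
        (v ∘ Sum.inl - d₀ *ᵥ (v ∘ Sum.inr ∘ Sum.inl))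
        (v ∘ Sum.inl - d₀ *ᵥ (v ∘ Sum.inr ∘ Sum.inr))) := by
    simp only [diagonalCone, fromBlocks_mulVec, fromRows_mulVec, neg_mulVec, zero_mulVec,
      one_mulVec, add_zero, zero_add, sub_eq_add_neg]
    ext (i | i | i) <;> rfl
  simp only [LinearMap.mem_ker, mulVecLin_apply, apply_eq]
  rw [← Sum.elim_zero_zero, Sum.elim_eq_iff, ← Sum.elim_zero_zero, Sum.elim_eq_iff,
    sub_eq_zero, sub_eq_zero]
  refine and_iff_right_of_imp fun hv ↦ ?_
  rw [hv.1, mulVec_mulVec, h, zero_mulVec]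

/-- The cocycles of the diagonal cone are the triples `(d₀ g, g, g - z)` with `z` a cocycle. -/
def kerDiagonalConeEquiv (h : d₁ * d₀ = 0) :
    LinearMap.ker (diagonalCone d₁ d₀).mulVecLin ≃ₗ[R] (l → R) × LinearMap.ker d₀.mulVecLin where
  toFun v := (v.1 ∘ Sum.inr ∘ Sum.inl, ⟨v.1 ∘ Sum.inr ∘ Sum.inl - v.1 ∘ Sum.inr ∘ Sum.inr, by
    obtain ⟨left, right⟩ := (mem_ker_diagonalCone h).1 v.2
    rw [LinearMap.mem_ker, mulVecLin_apply, mulVec_sub, ← left, ← right, sub_self]⟩)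
  invFun w := ⟨Sum.elim (d₀ *ᵥ w.1) (Sum.elim w.1 (w.1 - w.2.1)),
    (mem_ker_diagonalCone h).2 ⟨rfl, by
      have hw : d₀ *ᵥ w.2.1 = 0 := w.2.2
      exact (by rw [mulVec_sub, hw, sub_zero] : d₀ *ᵥ w.1 = d₀ *ᵥ (w.1 - w.2.1))⟩⟩
  map_add' v w := Prod.ext rfl (Subtype.ext (add_sub_add_comm _ _ _ _))
  map_smul' c v := Prod.ext rfl (Subtype.ext (smul_sub c _ _).symm)
  left_inv v := by
    ext (i | i | i)
    · exact (congrFun ((mem_ker_diagonalCone h).1 v.2).1 i).symm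
    · rfl
    · exact sub_sub_cancel _ _
  right_inv w := Prod.ext rfl (Subtype.ext (sub_sub_cancel _ _))

theorem rank_diagonalCone (h : d₁ * d₀ = 0) :
    (diagonalCone d₁ d₀).rank = Fintype.card m + d₀.rank := by
  have cone_nullity := rank_add_finrank_ker_mulVecLin (diagonalCone d₁ d₀)
  have nullity := rank_add_finrank_ker_mulVecLin d₀
  rw [(kerDiagonalConeEquiv h).finrank_eq, Module.finrank_prod,
    Module.finrank_fintype_fun_eq_card] at cone_nullity
  simp only [Fintype.card_sum] at cone_nullity
  omega

end Rank

section Incidence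

variable {a v w : ℕ} {x y z : Finset ℕ}

/-- The entry of the exterior derivative at `(x, y)`, for arbitrary finite sets `x` and `y`. -/
noncomputable def incidence (x y : Finset ℕ) : ℝ :=
  if y ⊆ x ∧ x.card = y.card + 1 then incSign x y else 0

/-- The sign `s(x ∪ {v}, x)` for `v ∉ x`, which is `-1` to the number of elements of `x` below
`v`. -/
noncomputable def vertexSign (v : ℕ) (x : Finset ℕ) : ℝ :=
  (-1) ^ (x.filter (· < v)).card

theorem vertexSign_mul_self (v : ℕ) (x : Finset ℕ) : vertexSign v x * vertexSign v x = 1 := by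
  rw [vertexSign, ← mul_pow, neg_one_mul, neg_neg, one_pow]

theorem vertexSign_ne_zero (v : ℕ) (x : Finset ℕ) : vertexSign v x ≠ 0 :=
  left_ne_zero_of_mul_eq_one (vertexSign_mul_self v x)

theorem vertexSign_insert (hv : v ∉ x) :
    vertexSign w (insert v x) = vertexSign w x * if v < w then -1 else 1 := by
  rw [vertexSign, vertexSign, Finset.filter_insert]
  split_ifs
  · rw [Finset.card_insert_of_notMem (fun h ↦ hv (Finset.mem_of_mem_filter v h)), pow_succ]
  · rw [mul_one]

theorem vertexSign_insert_mul_swap (hvw : v ≠ w) (hv : v ∉ x) (hw : w ∉ x) :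
    vertexSign w (insert v x) * vertexSign v x =
      -(vertexSign v (insert w x) * vertexSign w x) := by
  rw [vertexSign_insert hv, vertexSign_insert hw]
  rcases hvw.lt_or_gt with h | h
  · rw [if_pos h, if_neg h.not_gt]
    ring
  · rw [if_neg h.not_gt, if_pos h]
    ring

theorem insert_injOn_notMem (a : ℕ) : {x : Finset ℕ | a ∉ x}.InjOn (insert a) :=
  Finset.insert_erase_invOn.2.injOn

theorem incidence_of_card_ne (h : x.card ≠ y.card + 1) : incidence x y = 0 :=
  if_neg fun hxy ↦ h hxy.2

theorem incidence_of_not_covBy (h : ¬y ⋖ x) : incidence x y = 0 := by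
  refine if_neg fun hxy ↦ h (Finset.covBy_iff_card_sdiff_eq_one.2 ⟨hxy.1, ?_⟩)
  rw [Finset.card_sdiff_of_subset hxy.1, hxy.2, Nat.add_sub_cancel_left]

theorem incidence_of_mem_of_notMem (hy : a ∈ y) (hx : a ∉ x) : incidence x y = 0 :=
  if_neg fun hxy ↦ hx (hxy.1 hy)

theorem incidence_insert_self (hv : v ∉ x) : incidence (insert v x) x = vertexSign v x := by
  rw [incidence, if_pos ⟨Finset.subset_insert v x, Finset.card_insert_of_notMem hv⟩, incSign,
    Finset.insert_sdiff_cancel hv, Finset.filter_insert]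
  simp only [Finset.mem_singleton, exists_eq_left, lt_irrefl, if_false, vertexSign]

theorem incidence_insert_left (hx : a ∉ x) (hy : a ∉ y) :
    incidence (insert a x) y = if x = y then vertexSign a x else 0 := by
  split_ifs with hxy
  · rw [← hxy, incidence_insert_self hx]
  · refine incidence_of_not_covBy fun hcov ↦ hxy ?_
    obtain ⟨v, -, hv⟩ := Finset.covBy_iff_exists_insert.1 hcov
    obtain rfl : a = v :=
      (Finset.mem_insert.1 (hv ▸ Finset.mem_insert_self a x)).resolve_right hy
    exact (insert_injOn_notMem a hy hx hv).symm

theorem incidence_insert_insert (hx : a ∉ x) (hy : a ∉ y) :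
    incidence (insert a x) (insert a y) = -(vertexSign a x * incidence x y * vertexSign a y) := by
  by_cases hcov : y ⋖ x
  · obtain ⟨v, hv, rfl⟩ := Finset.covBy_iff_exists_insert.1 hcov
    have hva : v ≠ a := fun h ↦ hx (h ▸ Finset.mem_insert_self v y)
    rw [Finset.insert_comm, incidence_insert_self (by simp [hva, hv]), incidence_insert_self hv,
      vertexSign_insert_mul_swap hva hv hy, neg_mul, neg_neg, mul_assoc, vertexSign_mul_self,
      mul_one]
  · have not_covBy_insert : ¬insert a y ⋖ insert a x := by
      rw [Finset.covBy_iff_exists_insert] at hcov ⊢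
      rintro ⟨v, hv, hvx⟩
      obtain ⟨hva, hvy⟩ : v ≠ a ∧ v ∉ y := by simpa using hv
      rw [Finset.insert_comm] at hvx
      exact hcov ⟨v, hvy, insert_injOn_notMem a (by simp [hva.symm, hy]) hx hvx⟩
    rw [incidence_of_not_covBy hcov, incidence_of_not_covBy not_covBy_insert, mul_zero, zero_mul,
      neg_zero]

theorem incidence_mul_incidence_add_swap (hvw : v ≠ w) (hv : v ∉ z) (hw : w ∉ z) :
    incidence (insert w (insert v z)) (insert v z) * incidence (insert v z) z +
      incidence (insert w (insert v z)) (insert w z) * incidence (insert w z) z = 0 := by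
  rw [incidence_insert_self hv, incidence_insert_self hw,
    incidence_insert_self (by simp [hvw.symm, hw]), Finset.insert_comm,
    incidence_insert_self (by simp [hvw, hv]), vertexSign_insert_mul_swap hvw hv hw,
    neg_add_cancel]

theorem sum_incidence_mul_incidence {A : Finset (Finset ℕ)}
    (hA : ∀ y, z ⋖ y → y ⋖ x → y ∈ A) :
    ∑ y ∈ A, incidence x y * incidence y z = 0 := by
  have mul_eq_zero_of_not_covBy {y : Finset ℕ} (h : z ⋖ y → ¬y ⋖ x) :
      incidence x y * incidence y z = 0 := by
    by_cases hzy : z ⋖ y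
    · rw [incidence_of_not_covBy (h hzy), zero_mul]
    · rw [incidence_of_not_covBy hzy, mul_zero]
  by_cases hmid : ∃ y, z ⋖ y ∧ y ⋖ x
  · obtain ⟨_, hzy, hyx⟩ := hmid
    obtain ⟨v, hv, rfl⟩ := Finset.covBy_iff_exists_insert.1 hzy
    obtain ⟨w, hw, rfl⟩ := Finset.covBy_iff_exists_insert.1 hyx
    obtain ⟨hwv, hwz⟩ : w ≠ v ∧ w ∉ z := by simpa using hw
    have ne : insert v z ≠ insert w z := fun h ↦ hwv.symm ((Finset.insert_inj hv).1 h)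
    rw [Finset.sum_eq_add (insert v z) (insert w z) ne,
      incidence_mul_incidence_add_swap hwv.symm hv hwz]
    · rintro y - ⟨hyv, hyw⟩
      refine mul_eq_zero_of_not_covBy fun hzy' hyx' ↦ ?_
      obtain ⟨u, hu, rfl⟩ := Finset.covBy_iff_exists_insert.1 hzy'
      have hux := hyx'.le (Finset.mem_insert_self u z)
      rw [Finset.mem_insert, Finset.mem_insert] at hux
      rcases hux with rfl | rfl | huz
      exacts [hyw rfl, hyv rfl, hu huz]
    · exact fun h ↦ (h (hA _ hzy hyx)).elim
    · refine fun h ↦ (h (hA _ (Finset.covBy_insert hwz) ?_)).elim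
      rw [Finset.insert_comm]
      exact Finset.covBy_insert (by simp [hwv.symm, hv])
  · exact Finset.sum_eq_zero fun y _ ↦ mul_eq_zero_of_not_covBy fun hzy hyx ↦ hmid ⟨y, hzy, hyx⟩

end Incidence

section Coboundary

variable {A : Finset (Finset ℕ)}

/-- The exterior derivative from functions on the sets of cardinality `c` to functions on the sets
of cardinality `c + 1`. The index is a cardinality, one more than the dimension, so that the empty
simplex of an augmented complex has index `0`. -/
noncomputable def coboundary (A : Finset (Finset ℕ)) (c : ℕ) : Matrix (A # (c + 1)) (A # c) ℝ :=
  Matrix.of fun x y ↦ incidence x y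

theorem coboundary_mul_coboundary (hA : (A : Set (Finset ℕ)).OrdConnected) (c : ℕ) :
    coboundary A (c + 1) * coboundary A c = 0 := by
  ext ⟨x, hx⟩ ⟨z, hz⟩
  rw [Finset.mem_slice] at hx hz
  simp only [mul_apply, coboundary, of_apply, Matrix.zero_apply]
  rw [Finset.sum_coe_sort (A # (c + 1)) fun y ↦ incidence x y * incidence y z]
  refine sum_incidence_mul_incidence fun y hzy hyx ↦ Finset.mem_slice.2 ⟨?_, ?_⟩
  · exact hA.out hz.1 hx.1 ⟨hzy.le, hyx.le⟩
  · rw [← Nat.covBy_iff_add_one_eq.1 hzy.card_finset, hz.2]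

theorem hodge_apply (x y : A) :
    hodge A x y =
      ∑ z ∈ A, (incidence x z + incidence z x) * (incidence z y + incidence y z) := by
  rw [← Finset.sum_coe_sort]
  rfl

theorem hodgeBlock_eq (A : Finset (Finset ℕ)) (p : ℕ) :
    hodgeBlock A p = coboundary A p * (coboundary A p)ᵀ +
      (coboundary A (p + 1))ᵀ * coboundary A (p + 1) := by
  ext ⟨x, hx⟩ ⟨y, hy⟩
  simp only [hodgeBlock, submatrix_apply, hodge_apply]
  rw [Finset.mem_filter] at hx hy
  change _ = ∑ z : A # p, incidence x z * incidence y z +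
    ∑ z : A # (p + 1 + 1), incidence z x * incidence z y
  rw [Finset.sum_coe_sort (A # p) fun z ↦ incidence x z * incidence y z,
    Finset.sum_coe_sort (A # (p + 1 + 1)) fun z ↦ incidence z x * incidence z y, Finset.slice,
    Finset.slice, Finset.sum_filter, Finset.sum_filter, ← Finset.sum_add_distrib]
  refine Finset.sum_congr rfl fun z _ ↦ ?_
  have lower (hz : #z ≠ p) {x : Finset ℕ} (hx : #x = p + 1) : incidence x z = 0 :=
    incidence_of_card_ne (by omega)
  have upper (hz : #z ≠ p + 1 + 1) {x : Finset ℕ} (hx : #x = p + 1) : incidence z x = 0 :=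
    incidence_of_card_ne (by omega)
  split_ifs with hzp hzq hzq
  · omega
  · rw [upper hzq hx.2, upper hzq hy.2]
    ring
  · rw [lower hzp hx.2, lower hzp hy.2]
    ring
  · rw [upper hzq hx.2, lower hzp hx.2]
    ring

theorem betti_add_rank_add_rank (hA : (A : Set (Finset ℕ)).OrdConnected) (p : ℕ) :
    betti A p + (coboundary A p).rank + (coboundary A (p + 1)).rank = (A # (p + 1)).card := by
  have rank_hodgeBlock : (hodgeBlock A p).rank =
      (coboundary A p).rank + (coboundary A (p + 1)).rank := by
    rw [hodgeBlock_eq]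
    exact rank_mul_transpose_add_transpose_mul (coboundary_mul_coboundary hA p)
  have nullity := rank_add_finrank_ker_mulVecLin (hodgeBlock A p)
  rw [rank_hodgeBlock, Fintype.card_coe] at nullity
  rw [betti, toLin'_apply', add_assoc, add_comm]
  exact nullity

end Coboundary

section Augmentation

variable {A H : Finset (Finset ℕ)}

theorem rank_coboundary_zero_of_empty_notMem (h : ∅ ∉ A) : (coboundary A 0).rank = 0 := by
  have width := (coboundary A 0).rank_le_card_width
  rw [Fintype.card_coe, Finset.card_eq_zero.2] at width
  · exact Nat.le_zero.1 width
  · exact Finset.filter_eq_empty_iff.2 fun x hx hcard ↦ h (Finset.card_eq_zero.1 hcard ▸ hx)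

theorem slice_zero_of_empty_mem (h : ∅ ∈ A) : A # 0 = {∅} := by
  ext x
  rw [Finset.mem_slice, Finset.card_eq_zero, Finset.mem_singleton]
  exact and_iff_right_of_imp fun hx ↦ hx ▸ h

theorem rank_coboundary_zero_of_empty_mem {v : ℕ} (h : ∅ ∈ A) (hv : {v} ∈ A) :
    (coboundary A 0).rank = 1 := by
  refine le_antisymm ?_ (Nat.one_le_iff_ne_zero.2 fun hrank ↦ ?_)
  · exact (coboundary A 0).rank_le_card_width.trans_eq
      (by rw [Fintype.card_coe, slice_zero_of_empty_mem h, Finset.card_singleton])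
  · rw [Matrix.rank, Submodule.finrank_eq_zero, LinearMap.range_eq_bot, ← toLin'_apply',
      LinearEquiv.map_eq_zero_iff] at hrank
    have entry : coboundary A 0 ⟨{v}, Finset.mem_slice.2 ⟨hv, Finset.card_singleton v⟩⟩
        ⟨∅, Finset.mem_slice.2 ⟨h, Finset.card_empty⟩⟩ = vertexSign v ∅ :=
      incidence_insert_self (Finset.notMem_empty v)
    rw [hrank] at entry
    exact vertexSign_ne_zero v ∅ entry.symm

theorem slice_insert_empty (c : ℕ) : (insert ∅ H) # (c + 1) = H # (c + 1) := by
  rw [Finset.slice, Finset.filter_insert, if_neg (by simp)]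
  rfl

theorem rank_coboundary_insert_empty (c : ℕ) :
    (coboundary (insert ∅ H) (c + 1)).rank = (coboundary H (c + 1)).rank := by
  simp only [coboundary]
  rw [slice_insert_empty, slice_insert_empty]

theorem isComplex_iff :
    IsComplex H ↔ H.Nonempty ∧ ∅ ∉ H ∧ IsLowerSet (insert ∅ H : Set (Finset ℕ)) := by
  refine and_congr_right fun _ ↦ and_congr_right fun _ ↦ ⟨fun h x y hyx hx ↦ ?_, ?_⟩
  · rcases y.eq_empty_or_nonempty with rfl | hy
    · exact Set.mem_insert ∅ _
    · refine Or.inr (h x (hx.resolve_left ?_) y hyx hy)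
      rintro rfl
      exact hy.ne_empty (Finset.subset_empty.1 hyx)
  · exact fun h x hx y hyx hy ↦ (h hyx (Or.inr hx)).resolve_left hy.ne_empty

namespace IsComplex

theorem isLowerSet_insert_empty (hH : IsComplex H) :
    IsLowerSet ((insert ∅ H : Finset (Finset ℕ)) : Set (Finset ℕ)) := by
  simpa using (isComplex_iff.1 hH).2.2

theorem ordConnected (hH : IsComplex H) : (H : Set (Finset ℕ)).OrdConnected where
  out' y hy x hx z hz := by
    refine hH.2.2 x hx z hz.2 ((Finset.nonempty_iff_ne_empty.2 ?_).mono hz.1)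
    rintro rfl
    exact hH.2.1 hy

theorem exists_singleton_mem (hH : IsComplex H) : ∃ v, {v} ∈ H := by
  obtain ⟨x, hx⟩ := hH.1
  obtain ⟨v, hv⟩ := Finset.nonempty_iff_ne_empty.2 (ne_of_mem_of_not_mem hx hH.2.1)
  exact ⟨v, hH.2.2 x hx {v} (Finset.singleton_subset_iff.2 hv) (Finset.singleton_nonempty v)⟩

theorem betti_zero (hH : IsComplex H) : betti H 0 = betti (insert ∅ H) 0 + 1 := by
  obtain ⟨v, hv⟩ := hH.exists_singleton_mem
  have euler := betti_add_rank_add_rank hH.ordConnected 0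
  have euler_aug := betti_add_rank_add_rank hH.isLowerSet_insert_empty.ordConnected 0
  rw [rank_coboundary_zero_of_empty_notMem hH.2.1] at euler
  rw [rank_coboundary_zero_of_empty_mem (Finset.mem_insert_self _ _)
    (Finset.mem_insert_of_mem hv), rank_coboundary_insert_empty, slice_insert_empty] at euler_aug
  omega

theorem betti_succ (hH : IsComplex H) (p : ℕ) :
    betti H (p + 1) = betti (insert ∅ H) (p + 1) := by
  have euler := betti_add_rank_add_rank hH.ordConnected (p + 1)
  have euler_aug := betti_add_rank_add_rank hH.isLowerSet_insert_empty.ordConnected (p + 1)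
  rw [rank_coboundary_insert_empty, rank_coboundary_insert_empty, slice_insert_empty] at euler_aug
  omega

end IsComplex

end Augmentation

section DoubleCone

variable {A H : Finset (Finset ℕ)} {a b : ℕ}

/-- The suspension of a family of sets in which `∅` counts as a simplex: it adjoins to the family
its joins with the two apexes `a` and `b`. -/
def doubleCone (A : Finset (Finset ℕ)) (a b : ℕ) : Finset (Finset ℕ) :=
  A ∪ A.image (insert a) ∪ A.image (insert b)

theorem insert_empty_susp (H : Finset (Finset ℕ)) (a b : ℕ) :
    insert ∅ (susp H a b) = doubleCone (insert ∅ H) a b := by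
  ext x
  simp only [susp, doubleCone, Finset.mem_insert, Finset.mem_union, Finset.mem_singleton,
    Finset.image_insert, insert_empty_eq]
  tauto

theorem mem_doubleCone {x : Finset ℕ} :
    x ∈ doubleCone A a b ↔ x ∈ A ∨ (∃ y ∈ A, insert a y = x) ∨ ∃ y ∈ A, insert b y = x := by
  simp only [doubleCone, Finset.mem_union, Finset.mem_image, or_assoc]

theorem isLowerSet_doubleCone (hA : IsLowerSet (A : Set (Finset ℕ))) (a b : ℕ) :
    IsLowerSet (doubleCone A a b : Set (Finset ℕ)) := by
  have mem_or_mem_image {c : ℕ} {x y : Finset ℕ} (hx : x ∈ A) (hyx : y ⊆ insert c x) :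
      y ∈ A ∨ ∃ z ∈ A, insert c z = y := by
    by_cases hc : c ∈ y
    · exact Or.inr ⟨y.erase c, hA (Finset.subset_insert_iff.1 hyx) hx, Finset.insert_erase hc⟩
    · exact Or.inl (hA ((Finset.subset_insert_iff_of_notMem hc).1 hyx) hx)
  intro x y hyx hx
  rw [Finset.mem_coe, mem_doubleCone] at hx ⊢
  rcases hx with hx | ⟨x, hx, rfl⟩ | ⟨x, hx, rfl⟩
  · exact Or.inl (hA hyx hx)
  · exact (mem_or_mem_image hx hyx).imp_right Or.inl
  · exact (mem_or_mem_image hx hyx).imp_right Or.inr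

theorem isComplex_susp (hH : IsComplex H) (a b : ℕ) : IsComplex (susp H a b) := by
  refine isComplex_iff.2 ⟨hH.1.mono ?_, ?_, ?_⟩
  · exact fun x hx ↦ by simp [susp, hx]
  · simpa [susp] using hH.2.1
  · rw [← Finset.coe_insert, insert_empty_susp]
    exact isLowerSet_doubleCone hH.isLowerSet_insert_empty a b

/-- The sets of cardinality `c + 1` in `doubleCone A a b`: a base face, or a face of the base joined
with `a` or with `b`. -/
def doubleConeFace (A : Finset (Finset ℕ)) (a b c : ℕ) :
    A # (c + 1) ⊕ A # c ⊕ A # c → Finset ℕ :=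
  Sum.elim (fun x ↦ x) (Sum.elim (fun x ↦ insert a x) (fun x ↦ insert b x))

/-- The signs that make the coboundary of `doubleCone A a b` a diagonal cone. -/
noncomputable def doubleConeSign (A : Finset (Finset ℕ)) (a b c : ℕ) :
    A # (c + 1) ⊕ A # c ⊕ A # c → ℝ :=
  Sum.elim 1 (Sum.elim (fun x ↦ vertexSign a x) (fun x ↦ vertexSign b x))

theorem notMem_of_mem_slice {k d : ℕ} (hd : ∀ x ∈ A, d ∉ x) (x : A # k) : d ∉ x.1 :=
  hd x (Finset.mem_slice.1 x.2).1

theorem doubleConeFace_injective (ha : ∀ x ∈ A, a ∉ x) (hb : ∀ x ∈ A, b ∉ x) (hab : a ≠ b)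
    (c : ℕ) : Function.Injective (doubleConeFace A a b c) := by
  have insert_injective {k d : ℕ} (hd : ∀ x ∈ A, d ∉ x) :
      Function.Injective fun x : A # k ↦ insert d x.1 := fun x y h ↦
    Subtype.ext (insert_injOn_notMem d (notMem_of_mem_slice hd x) (notMem_of_mem_slice hd y) h)
  have ne_insert {d : ℕ} {x y : Finset ℕ} (hd : d ∉ x) : x ≠ insert d y := fun h ↦
    hd (h ▸ Finset.mem_insert_self d y)
  refine Subtype.val_injective.sumElim
    ((insert_injective ha).sumElim (insert_injective hb) fun x y ↦ ne_insert ?_) ?_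
  · simp [hab.symm, notMem_of_mem_slice hb x]
  · rintro x (y | y)
    exacts [ne_insert (notMem_of_mem_slice ha x), ne_insert (notMem_of_mem_slice hb x)]

theorem range_doubleConeFace (ha : ∀ x ∈ A, a ∉ x) (hb : ∀ x ∈ A, b ∉ x) (c : ℕ) :
    Set.range (doubleConeFace A a b c) = (doubleCone A a b) # (c + 1) := by
  ext x
  rw [Finset.mem_coe, Finset.mem_slice, mem_doubleCone]
  constructor
  · rintro ⟨⟨y, hy⟩ | ⟨y, hy⟩ | ⟨y, hy⟩, rfl⟩ <;> rw [Finset.mem_slice] at hy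
    · exact ⟨Or.inl hy.1, hy.2⟩
    · exact ⟨Or.inr (Or.inl ⟨y, hy.1, rfl⟩),
        (Finset.card_insert_of_notMem (ha y hy.1)).trans (congrArg (· + 1) hy.2)⟩
    · exact ⟨Or.inr (Or.inr ⟨y, hy.1, rfl⟩),
        (Finset.card_insert_of_notMem (hb y hy.1)).trans (congrArg (· + 1) hy.2)⟩
  · rintro ⟨hx | ⟨y, hy, rfl⟩ | ⟨y, hy, rfl⟩, hcard⟩
    · exact ⟨Sum.inl ⟨x, Finset.mem_slice.2 ⟨hx, hcard⟩⟩, rfl⟩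
    · rw [Finset.card_insert_of_notMem (ha y hy), Nat.add_right_cancel_iff] at hcard
      exact ⟨Sum.inr (Sum.inl ⟨y, Finset.mem_slice.2 ⟨hy, hcard⟩⟩), rfl⟩
    · rw [Finset.card_insert_of_notMem (hb y hy), Nat.add_right_cancel_iff] at hcard
      exact ⟨Sum.inr (Sum.inr ⟨y, Finset.mem_slice.2 ⟨hy, hcard⟩⟩), rfl⟩

/-- The enumeration of the sets of cardinality `c + 1` in `doubleCone A a b` by
`doubleConeFace`. -/
noncomputable def doubleConeEquiv (ha : ∀ x ∈ A, a ∉ x) (hb : ∀ x ∈ A, b ∉ x) (hab : a ≠ b)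
    (c : ℕ) : A # (c + 1) ⊕ A # c ⊕ A # c ≃ (doubleCone A a b) # (c + 1) :=
  (Equiv.ofInjective _ (doubleConeFace_injective ha hb hab c)).trans
    (Equiv.setCongr (range_doubleConeFace ha hb c))

theorem card_slice_doubleCone (ha : ∀ x ∈ A, a ∉ x) (hb : ∀ x ∈ A, b ∉ x) (hab : a ≠ b) (c : ℕ) :
    #((doubleCone A a b) # (c + 1)) = #(A # (c + 1)) + 2 * #(A # c) := by
  have card := Fintype.card_congr (doubleConeEquiv ha hb hab c)
  simp only [Fintype.card_sum, Fintype.card_coe] at card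
  omega

theorem incidence_doubleConeFace (ha : ∀ x ∈ A, a ∉ x) (hb : ∀ x ∈ A, b ∉ x) (hab : a ≠ b)
    (c : ℕ) (i : A # (c + 2) ⊕ A # (c + 1) ⊕ A # (c + 1)) (j : A # (c + 1) ⊕ A # c ⊕ A # c) :
    incidence (doubleConeFace A a b (c + 1) i) (doubleConeFace A a b c j) =
      doubleConeSign A a b (c + 1) i *
        diagonalCone (coboundary A (c + 1)) (coboundary A c) i j * doubleConeSign A a b c j := by
  rcases i with x | x | x <;> rcases j with y | y | y <;>
    simp only [doubleConeFace, doubleConeSign, diagonalCone, Sum.elim_inl, Sum.elim_inr,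
      fromBlocks_apply₁₁, fromBlocks_apply₁₂, fromBlocks_apply₂₁, fromBlocks_apply₂₂,
      fromRows_apply_inl, fromRows_apply_inr, Pi.one_apply, Matrix.zero_apply, Matrix.neg_apply,
      one_apply, coboundary, of_apply, Subtype.ext_iff, mul_zero, zero_mul, mul_one, one_mul,
      mul_ite, mul_neg, neg_mul]
  · exact incidence_of_mem_of_notMem (Finset.mem_insert_self a y) (notMem_of_mem_slice ha x)
  · exact incidence_of_mem_of_notMem (Finset.mem_insert_self b y) (notMem_of_mem_slice hb x)
  · exact incidence_insert_left (notMem_of_mem_slice ha x) (notMem_of_mem_slice ha y)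
  · exact incidence_insert_insert (notMem_of_mem_slice ha x) (notMem_of_mem_slice ha y)
  · exact incidence_of_mem_of_notMem (Finset.mem_insert_self b y)
      (by simp [hab.symm, notMem_of_mem_slice hb x])
  · exact incidence_insert_left (notMem_of_mem_slice hb x) (notMem_of_mem_slice hb y)
  · exact incidence_of_mem_of_notMem (Finset.mem_insert_self a y)
      (by simp [hab, notMem_of_mem_slice ha x])
  · exact incidence_insert_insert (notMem_of_mem_slice hb x) (notMem_of_mem_slice hb y)

theorem rank_coboundary_doubleCone (hA : (A : Set (Finset ℕ)).OrdConnected)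
    (ha : ∀ x ∈ A, a ∉ x) (hb : ∀ x ∈ A, b ∉ x) (hab : a ≠ b) (c : ℕ) :
    (coboundary (doubleCone A a b) (c + 1)).rank = #(A # (c + 1)) + (coboundary A c).rank := by
  have isUnit_det_sign (c : ℕ) : IsUnit (diagonal (doubleConeSign A a b c)).det := by
    rw [det_diagonal, isUnit_iff_ne_zero, Finset.prod_ne_zero_iff]
    rintro (x | x | x) -
    exacts [one_ne_zero, vertexSign_ne_zero a x, vertexSign_ne_zero b x]
  have signed : (coboundary (doubleCone A a b) (c + 1)).submatrix
      (doubleConeEquiv ha hb hab (c + 1)) (doubleConeEquiv ha hb hab c) =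
      diagonal (doubleConeSign A a b (c + 1)) *
        diagonalCone (coboundary A (c + 1)) (coboundary A c) *
          diagonal (doubleConeSign A a b c) := by
    ext i j
    rw [mul_diagonal, diagonal_mul, ← incidence_doubleConeFace ha hb hab]
    rfl
  rw [← rank_submatrix _ (doubleConeEquiv ha hb hab (c + 1)) (doubleConeEquiv ha hb hab c), signed,
    rank_mul_eq_left_of_isUnit_det _ _ (isUnit_det_sign c),
    rank_mul_eq_right_of_isUnit_det _ _ (isUnit_det_sign (c + 1)),
    rank_diagonalCone (coboundary_mul_coboundary hA c), Fintype.card_coe]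

theorem betti_doubleCone_zero {v : ℕ} (hA : IsLowerSet (A : Set (Finset ℕ))) (hv : {v} ∈ A)
    (ha : ∀ x ∈ A, a ∉ x) (hb : ∀ x ∈ A, b ∉ x) (hab : a ≠ b) :
    betti (doubleCone A a b) 0 = 0 := by
  have empty_mem : ∅ ∈ A := hA (Finset.empty_subset {v}) hv
  have euler_cone := betti_add_rank_add_rank (isLowerSet_doubleCone hA a b).ordConnected 0
  rw [rank_coboundary_doubleCone hA.ordConnected ha hb hab, card_slice_doubleCone ha hb hab,
    rank_coboundary_zero_of_empty_mem (mem_doubleCone.2 (Or.inl empty_mem))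
      (mem_doubleCone.2 (Or.inl hv)),
    rank_coboundary_zero_of_empty_mem empty_mem hv, slice_zero_of_empty_mem empty_mem,
    Finset.card_singleton] at euler_cone
  omega

theorem betti_doubleCone_succ (hA : IsLowerSet (A : Set (Finset ℕ)))
    (ha : ∀ x ∈ A, a ∉ x) (hb : ∀ x ∈ A, b ∉ x) (hab : a ≠ b) (p : ℕ) :
    betti (doubleCone A a b) (p + 1) = betti A p := by
  have euler := betti_add_rank_add_rank hA.ordConnected p
  have euler_cone := betti_add_rank_add_rank (isLowerSet_doubleCone hA a b).ordConnected (p + 1)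
  rw [rank_coboundary_doubleCone hA.ordConnected ha hb hab,
    rank_coboundary_doubleCone hA.ordConnected ha hb hab,
    card_slice_doubleCone ha hb hab] at euler_cone
  omega

end DoubleCone

/-- **Suspension formula.** If H is a finite abstract simplicial complex and a, b are two
distinct natural numbers not in the vertex set of H, then S(H) is a finite abstract
simplicial complex with b_0(S(H)) = 1, b_1(S(H)) = b_0(H) - 1 and
b_k(S(H)) = b_{k-1}(H) for all k ≥ 2. -/
theorem betti_suspension (H : Finset (Finset ℕ)) (hH : IsComplex H) (a b : ℕ)
    (ha : a ∉ H.sup id) (hb : b ∉ H.sup id) (hab : a ≠ b) :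
    IsComplex (susp H a b) ∧ betti (susp H a b) 0 = 1 ∧
      betti (susp H a b) 1 = betti H 0 - 1 ∧
      ∀ k, 2 ≤ k → betti (susp H a b) k = betti H (k - 1) := by
  have hS := isComplex_susp hH a b
  have hlower := hH.isLowerSet_insert_empty
  have notMem_of_notMem_sup {c : ℕ} (hc : c ∉ H.sup id) : ∀ x ∈ insert ∅ H, c ∉ x := by
    simpa [Finset.mem_sup] using hc
  have ha' := notMem_of_notMem_sup ha
  have hb' := notMem_of_notMem_sup hb
  obtain ⟨v, hv⟩ := hH.exists_singleton_mem
  refine ⟨hS, ?_, ?_, ?_⟩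
  · rw [hS.betti_zero, insert_empty_susp,
      betti_doubleCone_zero hlower (Finset.mem_insert_of_mem hv) ha' hb' hab]
  · rw [hS.betti_succ, insert_empty_susp, betti_doubleCone_succ hlower ha' hb' hab,
      hH.betti_zero, Nat.add_sub_cancel]
  · intro k hk
    obtain ⟨p, rfl⟩ := Nat.exists_eq_add_of_le' hk
    rw [hS.betti_succ, insert_empty_susp, betti_doubleCone_succ hlower ha' hb' hab,
      ← hH.betti_succ]
    rfl
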